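/- arXiv:1405.3013 — 2 statements merged into one kernel-verified Lean document; each statement's English description precedes it below -/
import Mathlib

section
/- If Λ is a Delone set in ℝ^d with the Meyer property (i.e., Λ − Λ is uniformly discrete), then for every n ≥ 1 any n-fold combination Λ ± Λ ± ⋯ ± Λ (with any choice of signs) is uniformly discrete. -/
open Metric Set Pointwise

/-- A set of points in ℝ^d is uniformly discrete if some open ball radius `r > 0`
contains at most one of its points, wherever it is centered. -/
def UniformlyDiscrete {d : ℕ} (Λ : Set (EuclideanSpace ℝ (Fin d))) : Prop :=
  ∃ r > (0 : ℝ), ∀ c : EuclideanSpace ℝ (Fin d), (Λ ∩ Metric.ball c r).Subsingleton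

/-- A set of points in ℝ^d is relatively dense if some open ball radius `R > 0`
contains at least one of its points, wherever it is centered. -/
def RelativelyDense {d : ℕ} (Λ : Set (EuclideanSpace ℝ (Fin d))) : Prop :=
  ∃ R > (0 : ℝ), ∀ c : EuclideanSpace ℝ (Fin d), (Λ ∩ Metric.ball c R).Nonempty

/-- Delone set: uniformly discrete and relatively dense. -/
def Delone {d : ℕ} (Λ : Set (EuclideanSpace ℝ (Fin d))) : Prop :=
  UniformlyDiscrete Λ ∧ RelativelyDense Λ

/-!
The heart of the matter is Lagarias' theorem that `Λ - Λ ⊆ Λ + F` for some finite `F`. Let `s z` be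
a point of `Λ` near `z`, chosen to be `z` itself when `z ∈ Λ`. For `v = a - b` with `a, b ∈ Λ`, the
map `f z = s (v + z) - s z` takes its values in the part of `Λ - Λ` near `v`, which has at most `N`
points, where `N` does not depend on `v`. A small move of `z` changes `f z` by an element of a fixed
finite set `D - D`. As the space is connected, any two values of `f` are therefore joined by a chain
of fewer than `N` such steps, so `a - b = f b` differs from `f 0 = s v - s 0` by one of finitely
many vectors.

By subtracting repeatedly, every integer combination `S` of copies of `Λ` lies in `Λ + G` with `G`
finite. Then `S - S ⊆ (Λ - Λ) + (G - G)` has finitely many points near `0`, and `S` is uniformly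
discrete.
-/

open Topology

section FiniteCovering

variable {A : Type*} [AddCommGroup A] {Λ M S T : Set A}

/-- `FinitelyCovers Λ S` says that finitely many translates of `Λ` cover `S`. The translates are
encoded as the sumset `Λ + F` for a finite set `F` of translation vectors. It is the relation by
which a Meyer set `Λ` controls the combinations `Λ ± ⋯ ± Λ`. -/
def FinitelyCovers (Λ S : Set A) : Prop :=
  ∃ F : Set A, F.Finite ∧ S ⊆ Λ + F

namespace FinitelyCovers

theorem of_subset (h : S ⊆ Λ) : FinitelyCovers Λ S :=
  ⟨{0}, finite_singleton 0, by simpa using h⟩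

theorem zero (hne : Λ.Nonempty) : FinitelyCovers Λ 0 := by
  obtain ⟨p, hp⟩ := hne
  exact ⟨{-p}, finite_singleton _, singleton_subset_iff.2 ⟨p, hp, -p, rfl, add_neg_cancel p⟩⟩

theorem trans (hM : FinitelyCovers Λ M) (hS : FinitelyCovers M S) : FinitelyCovers Λ S := by
  obtain ⟨F, hF, hMF⟩ := hM
  obtain ⟨G, hG, hSG⟩ := hS
  refine ⟨F + G, hF.add hG, ?_⟩
  calc S ⊆ M + G := hSG
    _ ⊆ Λ + F + G := add_subset_add_right hMF
    _ = Λ + (F + G) := add_assoc Λ F G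

theorem sub_sub (hS : FinitelyCovers Λ S) (hT : FinitelyCovers M T) :
    FinitelyCovers (Λ - M) (S - T) := by
  obtain ⟨F, hF, hSF⟩ := hS
  obtain ⟨G, hG, hTG⟩ := hT
  refine ⟨F - G, hF.sub hG, ?_⟩
  calc S - T ⊆ Λ + F - (M + G) := sub_subset_sub hSF hTG
    _ = Λ - M + (F - G) := add_sub_add_comm Λ F M G

theorem sub (hΛ : FinitelyCovers Λ (Λ - Λ)) (hS : FinitelyCovers Λ S) (hT : FinitelyCovers Λ T) :
    FinitelyCovers Λ (S - T) :=
  hΛ.trans (hS.sub_sub hT)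

theorem add (hΛ : FinitelyCovers Λ (Λ - Λ)) (hne : Λ.Nonempty) (hS : FinitelyCovers Λ S)
    (hT : FinitelyCovers Λ T) : FinitelyCovers Λ (S + T) := by
  simpa only [zero_sub, sub_neg_eq_add] using hΛ.sub hS (hΛ.sub (zero hne) hT)

theorem zsmul_image (hΛ : FinitelyCovers Λ (Λ - Λ)) (hne : Λ.Nonempty) (k : ℤ) :
    FinitelyCovers Λ ((k • ·) '' Λ) := by
  have hself : FinitelyCovers Λ Λ := of_subset Subset.rfl
  induction k with
  | zero => exact (zero hne).trans (of_subset (by simp))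
  | succ k ih =>
    refine (hΛ.add hne ih hself).trans (of_subset ?_)
    rintro _ ⟨x, hx, rfl⟩
    exact ⟨_, mem_image_of_mem _ hx, x, hx, (add_one_zsmul x k).symm⟩
  | pred k ih =>
    refine (hΛ.sub ih hself).trans (of_subset ?_)
    rintro _ ⟨x, hx, rfl⟩
    exact ⟨_, mem_image_of_mem _ hx, x, hx, by simp only [sub_smul, one_smul]⟩

theorem sum_zsmul {ι : Type*} [Fintype ι] (hΛ : FinitelyCovers Λ (Λ - Λ)) (hne : Λ.Nonempty)
    (k : ι → ℤ) :
    FinitelyCovers Λ {y | ∃ x : ι → A, (∀ i, x i ∈ Λ) ∧ y = ∑ i, k i • x i} := by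
  have hsum : FinitelyCovers Λ (∑ i, (k i • ·) '' Λ) :=
    Finset.sum_induction _ (FinitelyCovers Λ) (fun _ _ ↦ hΛ.add hne) (zero hne)
      fun i _ ↦ hΛ.zsmul_image hne (k i)
  refine hsum.trans (of_subset ?_)
  rintro _ ⟨x, hx, rfl⟩
  exact finsetSum_mem_finsetSum _ _ _ fun i _ ↦ mem_image_of_mem _ (hx i)

end FinitelyCovers

end FiniteCovering

section Chains

-- Here `n • F` is the `n`-fold sumset `F + ⋯ + F`, not the dilate `{n • x | x ∈ F}`.
theorem finite_nsmul {A : Type*} [AddMonoid A] {F : Set A} (hF : F.Finite) (n : ℕ) :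
    (n • F).Finite := by
  induction n with
  | zero => simp only [zero_nsmul, finite_zero]
  | succ n ih => simpa only [succ_nsmul] using ih.add hF

variable {A : Type*} [AddGroup A] {F : Set A}

theorem sub_mem_length_nsmul {V : Type*} {G : SimpleGraph V} {f : V → A}
    (hG : ∀ u v, G.Adj u v → f v - f u ∈ F) {u v : V} (w : G.Walk u v) :
    f v - f u ∈ w.length • F := by
  induction w with
  | nil => simp
  | @cons u v t huv w ih =>
    rw [SimpleGraph.Walk.length_cons, succ_nsmul, ← sub_add_sub_cancel (f t) (f v) (f u)]
    exact add_mem_add ih (hG u v huv)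

theorem sub_mem_nsmul_of_encard_range_le {X : Type*} [TopologicalSpace X] [PreconnectedSpace X]
    (hF : -F = F) {f : X → A} (hf : ∀ x, ∀ᶠ y in 𝓝 x, f y - f x ∈ F) {N : ℕ}
    (hN : (range f).encard ≤ N) (x y : X) : f y - f x ∈ N • F := by
  let G : SimpleGraph (range f) := SimpleGraph.fromRel fun u v ↦ (v : A) - u ∈ F
  have hadj (u v) (huv : G.Adj u v) : (v : A) - u ∈ F := by
    rcases huv.2 with h | h
    · exact h
    · rwa [← hF, Set.mem_neg, neg_sub]
  have hlocal : IsLocallyConstant fun x ↦ G.connectedComponentMk (rangeFactorization f x) := by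
    refine (IsLocallyConstant.iff_eventually_eq _).2 fun x ↦ (hf x).mono fun y hxy ↦ ?_
    by_cases heq : rangeFactorization f x = rangeFactorization f y
    · rw [heq]
    · have hG : G.Adj (rangeFactorization f x) (rangeFactorization f y) := ⟨heq, Or.inl hxy⟩
      exact (SimpleGraph.ConnectedComponent.sound hG.reachable).symm
  obtain ⟨w, hw⟩ := (SimpleGraph.ConnectedComponent.exact
    (hlocal.apply_eq_of_preconnectedSpace x y)).exists_isPath
  obtain ⟨hfin, hcard⟩ := encard_le_coe_iff_finite_ncard_le.1 hN
  have := hfin.fintype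
  have hlen : w.length ≤ N := by
    have := hw.length_lt
    rw [← Nat.card_eq_fintype_card, Nat.card_coe_set_eq] at this
    lia
  have hzero : 0 ∈ F := by simpa only [sub_self] using (hf x).self_of_nhds
  exact nsmul_subset_nsmul_right hzero hlen (sub_mem_length_nsmul hadj w)

end Chains

section UniformlyLocallyFinite

/-- A set is uniformly locally finite if the number of its points in a ball is bounded in terms of
the radius alone. The Meyer property of `Λ` enters the argument as this property of `Λ - Λ`. -/
def UniformlyLocallyFinite {X : Type*} [PseudoMetricSpace X] (S : Set X) : Prop :=
  ∀ K : ℝ, ∃ N : ℕ, ∀ x, (S ∩ ball x K).encard ≤ N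

theorem UniformlyLocallyFinite.finite_inter_ball {X : Type*} [PseudoMetricSpace X] {S : Set X}
    (hS : UniformlyLocallyFinite S) (x : X) (K : ℝ) : (S ∩ ball x K).Finite := by
  obtain ⟨N, hN⟩ := hS K
  exact finite_of_encard_le_coe (hN x)

theorem uniformlyLocallyFinite_of_subsingleton_inter_ball {E : Type*} [SeminormedAddCommGroup E]
    [ProperSpace E] {S : Set E} (hS : ∃ r > (0 : ℝ), ∀ c, (S ∩ ball c r).Subsingleton) :
    UniformlyLocallyFinite S := by
  obtain ⟨r, hr, hS⟩ := hS
  intro K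
  obtain ⟨t, -, ht⟩ := (isCompact_closedBall (0 : E) K).elim_nhds_subcover (ball · r)
    fun x _ ↦ ball_mem_nhds x hr
  refine ⟨t.card, fun x ↦ ?_⟩
  have hcover : S ∩ ball x K ⊆ ⋃ c ∈ t, S ∩ ball (x + c) r := by
    rintro y ⟨hyS, hyK⟩
    have hyx : y - x ∈ closedBall 0 K := by
      simpa only [mem_closedBall_zero_iff, dist_eq_norm] using (mem_ball.1 hyK).le
    obtain ⟨c, hc, hyc⟩ := mem_iUnion₂.1 (ht hyx)
    refine mem_iUnion₂.2 ⟨c, hc, hyS, ?_⟩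
    rwa [mem_ball, dist_eq_norm, ← sub_sub, ← dist_eq_norm]
  calc (S ∩ ball x K).encard ≤ (⋃ c ∈ t, S ∩ ball (x + c) r).encard := encard_le_encard hcover
    _ ≤ ∑ c ∈ t, (S ∩ ball (x + c) r).encard := t.set_encard_biUnion_le _
    _ ≤ ∑ c ∈ t, 1 := Finset.sum_le_sum fun c _ ↦ encard_le_one_iff_subsingleton.2 (hS (x + c))
    _ = t.card := by simp only [Finset.sum_const, nsmul_eq_mul, mul_one]

end UniformlyLocallyFinite

section Lagarias

theorem exists_nearby_selection {X : Type*} [PseudoMetricSpace X] {Λ : Set X} {R : ℝ}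
    (hR : ∀ c, (Λ ∩ ball c R).Nonempty) :
    ∃ s : X → X, (∀ z, s z ∈ Λ) ∧ (∀ z, dist (s z) z < R) ∧ ∀ z ∈ Λ, s z = z := by
  have hpoint (z : X) : ∃ p ∈ Λ, dist p z < R ∧ (z ∈ Λ → p = z) := by
    obtain ⟨p, hp, hpz⟩ := hR z
    by_cases hz : z ∈ Λ
    · exact ⟨z, hz, by simpa only [dist_self] using pos_of_mem_ball hpz, fun _ ↦ rfl⟩
    · exact ⟨p, hp, hpz, fun h ↦ absurd h hz⟩
  choose s hsΛ hsR hs using hpoint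
  exact ⟨s, hsΛ, hsR, hs⟩

variable {E : Type*} [SeminormedAddCommGroup E] {Λ : Set E} {R : ℝ}

theorem finitelyCovers_sub_self [PreconnectedSpace E] (hR : ∀ c, (Λ ∩ ball c R).Nonempty)
    (hΛ : UniformlyLocallyFinite (Λ - Λ)) : FinitelyCovers Λ (Λ - Λ) := by
  obtain ⟨s, hsΛ, hsR, hs⟩ := exists_nearby_selection hR
  have hdist (z w : E) : dist (s z - s w) (z - w) < R + R :=
    (dist_sub_sub_le _ _ _ _).trans_lt (add_lt_add (hsR z) (hsR w))
  set D := (Λ - Λ) ∩ ball 0 (R + R + 1)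
  have hstep (z w : E) (hzw : dist z w < 1) : s z - s w ∈ D := by
    refine ⟨sub_mem_sub (hsΛ z) (hsΛ w), ?_⟩
    calc dist (s z - s w) 0 ≤ dist (s z - s w) (z - w) + dist (z - w) 0 := dist_triangle _ _ _
      _ < R + R + 1 := add_lt_add (hdist z w) (by rwa [dist_zero_right, ← dist_eq_norm])
  have hDfin : D.Finite := hΛ.finite_inter_ball 0 _
  obtain ⟨N, hN⟩ := hΛ (R + R)
  refine ⟨N • (D - D) + {-s 0}, (finite_nsmul (hDfin.sub hDfin) N).add (finite_singleton _), ?_⟩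
  rintro _ ⟨a, ha, b, hb, rfl⟩
  let f (z : E) : E := s (a - b + z) - s z
  have hrange : range f ⊆ (Λ - Λ) ∩ ball (a - b) (R + R) := by
    rintro _ ⟨z, rfl⟩
    exact ⟨sub_mem_sub (hsΛ _) (hsΛ z), by simpa using hdist (a - b + z) z⟩
  have hf (z : E) : ∀ᶠ w in 𝓝 z, f w - f z ∈ D - D := by
    filter_upwards [ball_mem_nhds z one_pos] with w hw
    exact ⟨s (a - b + w) - s (a - b + z), hstep _ _ (by simpa using hw), s w - s z,
      hstep w z hw, sub_sub_sub_comm _ _ _ _⟩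
  have hchain : f b - f 0 ∈ N • (D - D) :=
    sub_mem_nsmul_of_encard_range_le (neg_sub D D) hf ((encard_le_encard hrange).trans (hN _)) 0 b
  refine ⟨s (a - b), hsΛ _, _, add_mem_add hchain rfl, ?_⟩
  simp only [f, sub_add_cancel, add_zero, hs a ha, hs b hb]
  abel

end Lagarias

section Discreteness

theorem FinitelyCovers.finite_inter_ball {E : Type*} [SeminormedAddCommGroup E] {Λ S : Set E}
    (hS : FinitelyCovers Λ S) (hΛ : ∀ K, (Λ ∩ ball 0 K).Finite) (K : ℝ) :
    (S ∩ ball 0 K).Finite := by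
  obtain ⟨F, hF, hSF⟩ := hS
  obtain ⟨C, hC⟩ := hF.isBounded.exists_norm_le
  refine ((hΛ (K + C)).add hF).subset ?_
  rintro x ⟨hxS, hxK⟩
  obtain ⟨l, hl, g, hg, rfl⟩ := hSF hxS
  refine add_mem_add ⟨hl, mem_ball_zero_iff.2 ?_⟩ hg
  calc ‖l‖ = ‖l + g - g‖ := by rw [add_sub_cancel_right]
    _ ≤ ‖l + g‖ + ‖g‖ := norm_sub_le _ _
    _ < K + C := add_lt_add_of_lt_of_le (mem_ball_zero_iff.1 hxK) (hC g hg)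

variable {E : Type*} [NormedAddCommGroup E]

theorem exists_subsingleton_inter_ball_of_finite_sub {S : Set E} {δ : ℝ} (hδ : 0 < δ)
    (hS : ((S - S) ∩ ball 0 δ).Finite) : ∃ r > (0 : ℝ), ∀ c, (S ∩ ball c r).Subsingleton := by
  have hnhds : ball (0 : E) δ ∩ (((S - S) ∩ ball 0 δ) \ {0})ᶜ ∈ 𝓝 0 :=
    Filter.inter_mem (ball_mem_nhds 0 hδ) <|
      hS.sdiff.isClosed.compl_mem_nhds fun h ↦ h.2 rfl
  obtain ⟨r, hr, hball⟩ := Metric.mem_nhds_iff.1 hnhds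
  refine ⟨r / 2, half_pos hr, fun c ↦ ?_⟩
  rintro x ⟨hxS, hxc⟩ y ⟨hyS, hyc⟩
  have hxy : x - y ∈ ball 0 r := by
    rw [mem_ball_zero_iff, ← dist_eq_norm]
    calc dist x y ≤ dist x c + dist y c := dist_triangle_right x y c
      _ < r / 2 + r / 2 := add_lt_add hxc hyc
      _ = r := add_halves r
  obtain ⟨hδxy, hnot⟩ := hball hxy
  by_contra hne
  exact hnot ⟨⟨sub_mem_sub hxS hyS, hδxy⟩, sub_ne_zero.2 hne⟩

theorem stmt0_general [PreconnectedSpace E] {ι : Type*} [Fintype ι] {Λ : Set E} {R : ℝ}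
    (hR : ∀ c, (Λ ∩ ball c R).Nonempty) (hΛ : UniformlyLocallyFinite (Λ - Λ)) (k : ι → ℤ) :
    ∃ r > (0 : ℝ), ∀ c,
      ({y | ∃ x : ι → E, (∀ i, x i ∈ Λ) ∧ y = ∑ i, k i • x i} ∩ ball c r).Subsingleton := by
  have hne : Λ.Nonempty := (hR 0).left
  have hcover := (finitelyCovers_sub_self hR hΛ).sum_zsmul hne k
  exact exists_subsingleton_inter_ball_of_finite_sub one_pos <|
    (hcover.sub_sub hcover).finite_inter_ball (hΛ.finite_inter_ball 0) 1

end Discreteness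

/-- if `Λ` is a Delone set with the Meyer property (`Λ - Λ` uniformly
discrete), then for every `n ≥ 1` and every choice of signs `ε` (starting with `+`),
the n-fold combination `Λ ± Λ ± ⋯ ± Λ` is uniformly discrete. -/
theorem stmt0 {d n : ℕ} (Λ : Set (EuclideanSpace ℝ (Fin d)))
    (hDelone : Delone Λ)
    (hMeyer : UniformlyDiscrete (Λ - Λ))
    (hn : 0 < n) (ε : Fin n → ℤ)
    (hε : ∀ i, ε i = 1 ∨ ε i = -1) (hε0 : ε ⟨0, hn⟩ = 1) :
    UniformlyDiscrete
      {y : EuclideanSpace ℝ (Fin d) |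
        ∃ x : Fin n → EuclideanSpace ℝ (Fin d), (∀ i, x i ∈ Λ) ∧ y = ∑ i, ε i • x i} := by
  obtain ⟨R, -, hR⟩ := hDelone.2
  exact stmt0_general hR (uniformlyLocallyFinite_of_subsingleton_inter_ball hMeyer) ε
end

section
/- A Delone set Λ in ℝ^d is a Meyer set (Λ − Λ uniformly discrete) if and only if there exists a finite set F ⊆ ℝ^d such that Λ − Λ ⊆ Λ + F. -/
open Metric Set Pointwise

/-!
If `Λ - Λ ⊆ Λ + F`, then `(Λ - Λ) - (Λ - Λ) ⊆ Λ + (F + F - F)`, which has only finitely many points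
near `0`; so the distances between points of `Λ - Λ` do not accumulate at `0`.

Conversely, round every point `x` to a point `p x` of `Λ` at distance less than `R`. Given `a` and
`b`, the difference `p (a + v) - p (b + v)` always lies in `(Λ - Λ) ∩ ball (a - b) (2 * R)`, a set
of cardinality at most some `N` independent of `a` and `b`. Adding to `v` an element of a bounded
generating set `K` changes this difference by an element of a fixed finite set `S`. Hence, erasing
loops from the walk that the difference performs as `v` moves from `-b` to `0` by steps from
`K ∪ -K`, the total change is a sum of at most `N` elements of `S`. So `p` is additive up to a
finite set of errors; since `p x - x` also takes only finitely many values on `Λ`, the difference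
`a - b` of two points of `Λ` is `p (a - b)` plus an element of a finite set.
-/

/-- Uniform discreteness in an arbitrary metric space; on Euclidean space this unfolds to
`UniformlyDiscrete`. -/
def IsUniformlyDiscrete {X : Type*} [PseudoMetricSpace X] (D : Set X) : Prop :=
  ∃ r > (0 : ℝ), ∀ c, (D ∩ ball c r).Subsingleton

/-- Relative density in an arbitrary metric space; on Euclidean space this unfolds to
`RelativelyDense`. -/
def IsRelativelyDense {X : Type*} [PseudoMetricSpace X] (D : Set X) : Prop :=
  ∃ R > (0 : ℝ), ∀ c, (D ∩ ball c R).Nonempty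

theorem addSubgroup_closure_eq_top_of_mem_nhds {G : Type*} [TopologicalSpace G] [AddGroup G]
    [IsTopologicalAddGroup G] [PreconnectedSpace G] {U : Set G} (hU : U ∈ nhds 0) :
    AddSubgroup.closure U = ⊤ := by
  have hopen : IsOpen (AddSubgroup.closure U : Set G) :=
    AddSubgroup.isOpen_of_mem_nhds _ (Filter.mem_of_superset hU AddSubgroup.subset_closure)
  have hclopen : IsClopen (AddSubgroup.closure U : Set G) :=
    ⟨AddSubgroup.isClosed_of_isOpen _ hopen, hopen⟩
  exact SetLike.coe_injective (hclopen.eq_univ ⟨0, zero_mem _⟩)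

theorem sub_sub_sub_subset_add {G : Type*} [AddCommGroup G] {Λ F : Set G}
    (h : Λ - Λ ⊆ Λ + F) : (Λ - Λ) - (Λ - Λ) ⊆ Λ + (F + F - F) :=
  calc (Λ - Λ) - (Λ - Λ)
      ⊆ (Λ + F) - (Λ + F) := sub_subset_sub h h
    _ = (Λ - Λ) + (F - F) := add_sub_add_comm _ _ _ _
    _ ⊆ (Λ + F) + (F - F) := add_subset_add_right h
    _ = Λ + (F + F - F) := by rw [add_assoc, add_sub_assoc]

section Walks

variable {G H : Type*} [AddGroup G] [AddGroup H]

theorem finite_nsmul_s1 {s : Set G} (hs : s.Finite) (n : ℕ) : (n • s).Finite := by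
  classical
  lift s to Finset G using hs
  exact (n • s).finite_toSet.subset (Finset.coe_nsmul s n).ge

theorem neg_add_mem_length_nsmul {s : Set G} (hs : -s = s) {x y : G}
    (w : (SimpleGraph.addCayley s).Walk x y) : -x + y ∈ w.length • s := by
  induction w with
  | nil => simp
  | @cons x y z hxy w ih =>
    have hstep : -x + y ∈ s := by
      obtain ⟨-, h | h⟩ := (SimpleGraph.addCayley_adj s x y).1 hxy
      · exact h
      · simpa [hs] using Set.neg_mem_neg.2 h
    rw [SimpleGraph.Walk.length_cons, succ_nsmul']
    simpa [add_assoc] using Set.add_mem_add hstep ih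

theorem neg_add_mem_nsmul_of_reachable_induce {s t : Set G} (h0 : 0 ∈ s) (hs : -s = s) {N : ℕ}
    (ht : t.encard ≤ N) {x y : t} (hxy : ((SimpleGraph.addCayley s).induce t).Reachable x y) :
    -(x : G) + y ∈ N • s := by
  have := (finite_of_encard_le_coe ht).fintype
  obtain ⟨w, hw⟩ := hxy.exists_isPath
  have hlength : w.length ≤ N := by
    rw [← coe_fintypeCard, Nat.cast_le] at ht
    exact hw.length_lt.le.trans ht
  have hmem := neg_add_mem_length_nsmul hs (w.map (SimpleGraph.Embedding.induce t).toHom)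
  rw [SimpleGraph.Walk.length_map] at hmem
  exact nsmul_subset_nsmul_right h0 hlength hmem

theorem reachable_of_closure_eq_top {V : Type*} {Γ : SimpleGraph V} {K : Set G}
    (hK : AddSubgroup.closure K = ⊤) {f : G → V}
    (hf : ∀ v, ∀ k ∈ K, Γ.Reachable (f v) (f (v + k))) (u v : G) : Γ.Reachable (f u) (f v) := by
  suffices h : ∀ w ∈ AddSubgroup.closure K, ∀ u, Γ.Reachable (f u) (f (u + w)) by
    simpa using h (-u + v) (hK ▸ AddSubgroup.mem_top _) u
  intro w hw
  induction hw using AddSubgroup.closure_induction with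
  | mem k hk => exact fun u => hf u k hk
  | zero => simp
  | add w w' _ _ ih ih' => exact fun u => by simpa [add_assoc] using (ih u).trans (ih' (u + w))
  | neg w _ ih => exact fun u => by simpa using (ih (u + -w)).symm

theorem neg_add_mem_nsmul_of_steps_mem {K : Set G} (hK : AddSubgroup.closure K = ⊤) {s t : Set H}
    (h0 : 0 ∈ s) (hs : -s = s) {N : ℕ} (ht : t.encard ≤ N) {f : G → H} (hft : ∀ v, f v ∈ t)
    (hfs : ∀ v, ∀ k ∈ K, -f v + f (v + k) ∈ s) (u v : G) : -f u + f v ∈ N • s := by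
  let g : G → t := fun v => ⟨f v, hft v⟩
  refine neg_add_mem_nsmul_of_reachable_induce h0 hs ht (x := g u) (y := g v)
    (reachable_of_closure_eq_top hK (fun v k hk => ?_) u v)
  by_cases heq : g v = g (v + k)
  · rw [heq]
  · refine SimpleGraph.Adj.reachable (SimpleGraph.comap_adj.2 ?_)
    exact (SimpleGraph.addCayley_adj s _ _).2 ⟨Subtype.coe_ne_coe.2 heq, .inl (hfs v k hk)⟩

end Walks

section Seminormed

variable {E : Type*} [SeminormedAddCommGroup E]

theorem IsUniformlyDiscrete.exists_encard_inter_ball_le [ProperSpace E] {D : Set E}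
    (hD : IsUniformlyDiscrete D) (R : ℝ) : ∃ N : ℕ, ∀ c, (D ∩ ball c R).encard ≤ N := by
  obtain ⟨r, hr, hD⟩ := hD
  obtain ⟨t, -, ht, hcover⟩ := (isCompact_closedBall (0 : E) R).finite_cover_balls hr
  lift t to Finset E using ht
  refine ⟨t.card, fun c => ?_⟩
  have hsub : D ∩ ball c R ⊆ ⋃ y ∈ t, D ∩ ball (c + y) r := by
    rintro x ⟨hxD, hxc⟩
    have hx : x - c ∈ closedBall 0 R := by
      simpa [dist_eq_norm] using (mem_ball.1 hxc).le
    obtain ⟨y, hy, hxy⟩ := mem_iUnion₂.1 (hcover hx)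
    exact mem_iUnion₂.2 ⟨y, hy, hxD, by simpa [dist_eq_norm, sub_sub] using hxy⟩
  calc (D ∩ ball c R).encard
      ≤ (⋃ y ∈ t, D ∩ ball (c + y) r).encard := encard_le_encard hsub
    _ ≤ ∑ y ∈ t, (D ∩ ball (c + y) r).encard := t.set_encard_biUnion_le _
    _ ≤ ∑ _y ∈ t, 1 := Finset.sum_le_sum fun y _ => encard_le_one_iff_subsingleton.2 (hD (c + y))
    _ = t.card := by simp

theorem IsUniformlyDiscrete.finite_inter_ball [ProperSpace E] {D : Set E}
    (hD : IsUniformlyDiscrete D) (c : E) (R : ℝ) : (D ∩ ball c R).Finite :=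
  let ⟨_, hN⟩ := hD.exists_encard_inter_ball_le R
  finite_of_encard_le_coe (hN c)

theorem IsUniformlyDiscrete.finite_add_inter_ball [ProperSpace E] {D F : Set E}
    (hD : IsUniformlyDiscrete D) (hF : F.Finite) (c : E) (R : ℝ) :
    ((D + F) ∩ ball c R).Finite := by
  refine (hF.biUnion fun f _ => (hD.finite_inter_ball (c - f) R).image (· + f)).subset ?_
  rintro _ ⟨⟨x, hx, f, hf, rfl⟩, hball⟩
  refine mem_iUnion₂.2 ⟨f, hf, x, ⟨hx, ?_⟩, rfl⟩
  simpa [dist_eq_norm, sub_sub_eq_add_sub] using hball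

theorem sub_mem_sub_inter_ball {Λ : Set E} {R : ℝ} {p : E → E} (hp : ∀ x, p x ∈ Λ ∩ ball x R)
    (x y : E) : p x - p y ∈ (Λ - Λ) ∩ ball (x - y) (2 * R) := by
  refine ⟨sub_mem_sub (hp x).1 (hp y).1, ?_⟩
  calc dist (p x - p y) (x - y)
      ≤ dist (p x) x + dist (p y) y := dist_sub_sub_le _ _ _ _
    _ < 2 * R := by linarith [mem_ball.1 (hp x).2, mem_ball.1 (hp y).2]

theorem exists_finite_forall_sub_sub_sub_mem [ProperSpace E] {K Λ : Set E}
    (hK : Bornology.IsBounded K) (hgen : AddSubgroup.closure K = ⊤)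
    (hΛ : IsUniformlyDiscrete (Λ - Λ)) {R : ℝ} {p : E → E} (hp : ∀ x, p x ∈ Λ ∩ ball x R) :
    ∃ S : Set E, S.Finite ∧ ∀ a b, p a - p b - (p (a - b) - p 0) ∈ S := by
  obtain ⟨r, hr, hKr⟩ := hK.subset_ball_lt 0 0
  obtain ⟨N, hN⟩ := hΛ.exists_encard_inter_ball_le (2 * R)
  set D := (Λ - Λ) ∩ ball 0 (r + 2 * R)
  have hD : D.Finite := hΛ.finite_inter_ball _ _
  have sub_mem_D {x y : E} (hxy : x - y ∈ ball 0 r) : p x - p y ∈ D := by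
    obtain ⟨hmem, hball⟩ := sub_mem_sub_inter_ball hp x y
    exact ⟨hmem, ball_subset_ball' (by linarith [mem_ball.1 hxy]) hball⟩
  have zero_mem_sub : (0 : E) ∈ D - D := by
    have h0 : p 0 - p 0 ∈ D := sub_mem_D (by simpa)
    exact ⟨_, h0, _, h0, sub_self _⟩
  refine ⟨N • (D - D), finite_nsmul_s1 (hD.sub hD) N, fun a b => ?_⟩
  let f : E → E := fun v => p (a + v) - p (b + v)
  have hft (v : E) : f v ∈ (Λ - Λ) ∩ ball (a - b) (2 * R) := by
    simpa using sub_mem_sub_inter_ball hp (a + v) (b + v)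
  have hfs (v k : E) (hk : k ∈ K) : -f v + f (v + k) ∈ D - D := by
    have ha : p (a + (v + k)) - p (a + v) ∈ D := sub_mem_D (by simpa using hKr hk)
    have hb : p (b + (v + k)) - p (b + v) ∈ D := sub_mem_D (by simpa using hKr hk)
    convert sub_mem_sub ha hb using 1
    dsimp only [f]
    abel
  have hmem := neg_add_mem_nsmul_of_steps_mem hgen zero_mem_sub (neg_sub D D) (hN (a - b))
    hft hfs (-b) 0
  simpa only [f, add_neg_cancel, add_zero, ← sub_eq_add_neg, neg_add_eq_sub] using hmem

theorem IsRelativelyDense.exists_finite_sub_subset_add [ProperSpace E] {K Λ : Set E}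
    (hdense : IsRelativelyDense Λ) (hK : Bornology.IsBounded K)
    (hgen : AddSubgroup.closure K = ⊤) (hdisc : IsUniformlyDiscrete (Λ - Λ)) :
    ∃ F : Set E, F.Finite ∧ Λ - Λ ⊆ Λ + F := by
  obtain ⟨R, -, hR⟩ := hdense
  choose p hp using hR
  obtain ⟨S, hS, hpS⟩ := exists_finite_forall_sub_sub_sub_mem hK hgen hdisc hp
  set D := (Λ - Λ) ∩ ball 0 R
  have hD : D.Finite := hdisc.finite_inter_ball 0 R
  have rounding_error_mem {x : E} (hx : x ∈ Λ) : p x - x ∈ D :=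
    ⟨sub_mem_sub (hp x).1 hx, by simpa [dist_eq_norm] using (hp x).2⟩
  refine ⟨S - {p 0} - (D - D), (hS.sub (finite_singleton _)).sub (hD.sub hD), ?_⟩
  rintro _ ⟨a, ha, b, hb, rfl⟩
  have hsplit : a - b =
      p (a - b) + (p a - p b - (p (a - b) - p 0) - p 0 - ((p a - a) - (p b - b))) := by abel
  dsimp only
  rw [hsplit]
  exact add_mem_add (hp _).1 (sub_mem_sub (sub_mem_sub (hpS a b) rfl)
    (sub_mem_sub (rounding_error_mem ha) (rounding_error_mem hb)))

end Seminormed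

section Normed

variable {E : Type*} [NormedAddCommGroup E]

theorem isUniformlyDiscrete_of_finite_sub_inter_ball {D : Set E} {ρ : ℝ} (hρ : 0 < ρ)
    (hD : ((D - D) ∩ ball 0 ρ).Finite) : IsUniformlyDiscrete D := by
  obtain ⟨ε, hε, hball⟩ := Metric.mem_nhds_iff.1
    (hD.sdiff (t := {0}).isClosed.isOpen_compl.mem_nhds (x := 0) (by simp))
  refine ⟨min ε ρ / 2, by positivity, ?_⟩
  rintro c x ⟨hx, hxc⟩ y ⟨hy, hyc⟩
  have hxy : ‖x - y‖ < min ε ρ := by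
    rw [← dist_eq_norm]
    linarith [dist_triangle_right x y c, mem_ball.1 hxc, mem_ball.1 hyc]
  obtain ⟨hxyε, hxyρ⟩ := lt_min_iff.1 hxy
  by_contra hne
  exact hball (mem_ball_zero_iff.2 hxyε)
    ⟨⟨sub_mem_sub hx hy, mem_ball_zero_iff.2 hxyρ⟩, sub_ne_zero.2 hne⟩

theorem IsUniformlyDiscrete.sub_of_sub_subset_add [ProperSpace E] {Λ F : Set E}
    (hΛ : IsUniformlyDiscrete Λ) (hF : F.Finite) (h : Λ - Λ ⊆ Λ + F) :
    IsUniformlyDiscrete (Λ - Λ) :=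
  isUniformlyDiscrete_of_finite_sub_inter_ball one_pos <|
    (hΛ.finite_add_inter_ball ((hF.add hF).sub hF) 0 1).subset <|
      inter_subset_inter_left _ (sub_sub_sub_subset_add h)

theorem stmt1_general [ProperSpace E] {K Λ : Set E} (hK : Bornology.IsBounded K)
    (hgen : AddSubgroup.closure K = ⊤) (hdisc : IsUniformlyDiscrete Λ)
    (hdense : IsRelativelyDense Λ) :
    IsUniformlyDiscrete (Λ - Λ) ↔ ∃ F : Set E, F.Finite ∧ Λ - Λ ⊆ Λ + F :=
  ⟨hdense.exists_finite_sub_subset_add hK hgen,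
    fun ⟨_, hF, h⟩ => hdisc.sub_of_sub_subset_add hF h⟩

end Normed

/-- a Delone set `Λ` of ℝ^d is Meyer (`Λ - Λ` uniformly discrete)
iff there is a finite set `F` with `Λ - Λ ⊆ Λ + F`. -/
theorem stmt1 {d : ℕ} (Λ : Set (EuclideanSpace ℝ (Fin d))) (hDelone : Delone Λ) :
    UniformlyDiscrete (Λ - Λ) ↔
      ∃ F : Set (EuclideanSpace ℝ (Fin d)), F.Finite ∧ Λ - Λ ⊆ Λ + F :=
  stmt1_general isBounded_ball (addSubgroup_closure_eq_top_of_mem_nhds (ball_mem_nhds 0 one_pos))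
    hDelone.1 hDelone.2
end
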